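/- Let η > 0, let N ≥ 1 be an integer, and let q ∈ (0,1) with q ≠ 1/2. Define F : ℝ → ℝ by F(r) = q·exp(−ηN(r−1)²) + (1−q)·exp(−ηNr²). Then F'(q) = −2ηN·q(1−q)·( exp(−ηNq²) − exp(−ηN(1−q)²) ) ≠ 0, so the truthful report r = q is not a local maximizer of F; there exists r* ≠ q with F(r*) > F(q). -/

import Mathlib

/-! At the report `r = q` the two outcomes enter the derivative with the opposite prefactors
`q * (q - 1)` and `(1 - q) * q`, so they cancel only if the two exponentials agree, that is, only
if `q ^ 2 = (1 - q) ^ 2`. Away from `q = 1/2` the first-order condition at `q` therefore fails. -/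

theorem exists_ne_and_lt_of_not_isLocalMax {α β : Type*} [TopologicalSpace α] [LinearOrder β]
    {f : α → β} {a : α} (h : ¬IsLocalMax f a) : ∃ x, x ≠ a ∧ f a < f x := by
  obtain ⟨x, hx⟩ := (Filter.not_eventually.mp h).exists
  have hlt : f a < f x := not_le.mp hx
  exact ⟨x, fun hxa => hlt.ne (congrArg f hxa.symm), hlt⟩

theorem hasDerivAt_exp_mul_sub_sq (c a x : ℝ) :
    HasDerivAt (fun r => Real.exp (c * (r - a) ^ 2))
      (2 * c * (x - a) * Real.exp (c * (x - a) ^ 2)) x := by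
  have hsq : HasDerivAt (fun r : ℝ => (r - a) ^ 2) (2 * (x - a)) x := by
    simpa using ((hasDerivAt_id' x).sub_const a).fun_pow 2
  exact (hsq.const_mul c).exp.congr_deriv (by ring)

theorem exp_mul_sq_eq_exp_mul_one_sub_sq_iff {c : ℝ} (hc : c ≠ 0) (x : ℝ) :
    Real.exp (c * x ^ 2) = Real.exp (c * (1 - x) ^ 2) ↔ x = 1 / 2 := by
  rw [Real.exp_eq_exp, mul_right_inj' hc]
  constructor <;> intro h
  · linarith
  · norm_num [h]

/-- The expected weight multiplier of a selected worker with belief `q` who reports `r`, under the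
quadratic loss. The rate `c` combines the learning rate with the inverse selection probability, so
EXP3 with `N` equally likely workers has `c = η * N`. -/
noncomputable def expectedMultiplier (c q r : ℝ) : ℝ :=
  q * Real.exp (-c * (r - 1) ^ 2) + (1 - q) * Real.exp (-c * r ^ 2)

namespace expectedMultiplier

/-- The slope of `expectedMultiplier c q` at the truthful report `r = q`, in closed form rather than
as a `deriv`. -/
noncomputable def truthfulSlope (c q : ℝ) : ℝ :=
  -2 * c * q * (1 - q) * (Real.exp (-c * q ^ 2) - Real.exp (-c * (1 - q) ^ 2))

theorem hasDerivAt (c q r : ℝ) :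
    HasDerivAt (expectedMultiplier c q)
      (-2 * c * (q * (r - 1) * Real.exp (-c * (r - 1) ^ 2) +
        (1 - q) * r * Real.exp (-c * r ^ 2))) r := by
  have hone := (hasDerivAt_exp_mul_sub_sq (-c) 1 r).const_mul q
  have hzero := (hasDerivAt_exp_mul_sub_sq (-c) 0 r).const_mul (1 - q)
  simp only [sub_zero] at hzero
  exact (hone.add hzero).congr_deriv (by ring)

theorem hasDerivAt_self (c q : ℝ) :
    HasDerivAt (expectedMultiplier c q) (truthfulSlope c q) q := by
  refine (hasDerivAt c q q).congr_deriv ?_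
  rw [truthfulSlope, sub_sq_comm 1 q]
  ring

theorem truthfulSlope_ne_zero {c q : ℝ} (hc : c ≠ 0) (hq₀ : q ≠ 0) (hq₁ : q ≠ 1)
    (hq₂ : q ≠ 1 / 2) : truthfulSlope c q ≠ 0 := by
  have hexp : Real.exp (-c * q ^ 2) - Real.exp (-c * (1 - q) ^ 2) ≠ 0 :=
    sub_ne_zero.mpr ((exp_mul_sq_eq_exp_mul_one_sub_sq_iff (neg_ne_zero.mpr hc) q).not.mpr hq₂)
  have hq₁' : 1 - q ≠ 0 := sub_ne_zero.mpr hq₁.symm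
  have hc' : -2 * c ≠ 0 := mul_ne_zero (by norm_num) hc
  exact mul_ne_zero (mul_ne_zero (mul_ne_zero hc' hq₀) hq₁') hexp

end expectedMultiplier

open expectedMultiplier in
theorem stmt7_general {c q : ℝ} (hc : c ≠ 0) (hq₀ : q ≠ 0) (hq₁ : q ≠ 1) (hq₂ : q ≠ 1 / 2) :
    HasDerivAt (expectedMultiplier c q) (truthfulSlope c q) q ∧
      truthfulSlope c q ≠ 0 ∧ ¬IsLocalMax (expectedMultiplier c q) q :=
  have hderiv := hasDerivAt_self c q
  have hslope := truthfulSlope_ne_zero hc hq₀ hq₁ hq₂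
  ⟨hderiv, hslope, fun hmax => hslope (hmax.hasDerivAt_eq_zero hderiv)⟩

/-- Untruthfulness of the EXP3 scheme: the expected selected-weight multiplier
`F(r) = q e^{−ηN(r−1)²} + (1−q) e^{−ηNr²}` has nonzero derivative at the
truthful report `r = q` when `q ≠ 1/2`, so `r = q` is not a (local) maximizer. -/
theorem stmt7 (η : ℝ) (hη : 0 < η) (N : ℕ) (hN : 1 ≤ N)
    (q : ℝ) (hq : q ∈ Set.Ioo (0:ℝ) 1) (hq2 : q ≠ 1/2) :
    let F : ℝ → ℝ := fun r =>
      q * Real.exp (-(η * N) * (r - 1) ^ 2) + (1 - q) * Real.exp (-(η * N) * r ^ 2)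
    HasDerivAt F
      (-2 * (η * N) * q * (1 - q) *
        (Real.exp (-(η * N) * q ^ 2) - Real.exp (-(η * N) * (1 - q) ^ 2))) q ∧
    -2 * (η * N) * q * (1 - q) *
        (Real.exp (-(η * N) * q ^ 2) - Real.exp (-(η * N) * (1 - q) ^ 2)) ≠ 0 ∧
    (∃ r : ℝ, r ≠ q ∧ F r > F q) := by
  have hc : η * N ≠ 0 := mul_ne_zero hη.ne' (Nat.cast_ne_zero.mpr (Nat.one_le_iff_ne_zero.mp hN))
  obtain ⟨hderiv, hslope, hmax⟩ := stmt7_general hc hq.1.ne' hq.2.ne hq2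
  exact ⟨hderiv, hslope, exists_ne_and_lt_of_not_isLocalMax hmax⟩
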